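/- Let δ be an increment function of size n, P a Dyck word of size n with a valley d u_i, C_i the δ-excursion of u_i in P, and Q the δ-rotation of P at u_i. Then for every j such that u_j lies in C_i one has h_j(Q) = h_j(P) − 1, and h_j(Q) = h_j(P) for all other j. Furthermore, if there exists j such that the δ-excursion of u_j in P ends with the down step of the valley d u_i, then ℓ_j(Q;δ) = ℓ_j(P;δ) + ℓ_i(P;δ), and for all other j one has ℓ_j(Q;δ) = ℓ_j(P;δ). -/

import Mathlib

/-!
Common definitions.  A letter of a word is a `Bool`: `true` is an up step `u`,
`false` is a down step `d`.  Positions in words are 0-based.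
-/

/-- A (possibly empty) Dyck word: as many `u`'s as `d`'s, and every
prefix has at least as many `u`'s as `d`'s. -/
def IsDyckPath (w : List Bool) : Prop :=
  w.count true = w.count false ∧ ∀ p, p <+: w → p.count false ≤ p.count true

/-- A Dyck word of size `n`: `n` up steps, `n` down steps, every prefix has
at least as many `u`'s as `d`'s. -/
def IsDyckWord (n : ℕ) (w : List Bool) : Prop :=
  w.count true = n ∧ w.count false = n ∧ ∀ p, p <+: w → p.count false ≤ p.count true

/-- The set of Dyck words of size `n`. -/
def DyckSet (n : ℕ) : Set (List Bool) := {w | IsDyckWord n w}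

/-- An increment function: a `{0,1}`-valued function (the paper's `δ : {1,…,n} → {0,1}`;
only the values on `{1,…,n}` are ever used). -/
def IsIncFun (δ : ℕ → ℤ) : Prop := ∀ i, δ i = 0 ∨ δ i = 1

/-- The 0-based position in `w` of the `i`-th up step `u_i` (`i` is 1-based). -/
def upPos (w : List Bool) (i : ℕ) : ℕ :=
  ((List.range w.length).filter fun q => w.getD q false = true).getD (i - 1) 0

/-- `h_i(w)`: the (1-based, between 1 and 2n) position of the up step `u_i` in `w`. -/
def hpos (w : List Bool) (i : ℕ) : ℕ := upPos w i + 1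

/-- The change of δ-altitude produced by the letter at position `q` of `w`:
the up step `u_i` contributes `δ i`, a down step contributes `-1`. -/
def stepVal (δ : ℕ → ℤ) (w : List Bool) (q : ℕ) : ℤ :=
  if w.getD q false = true then δ ((w.take (q + 1)).count true) else -1

/-- The δ-elevation of the factor of `w` occupying positions `a, …, b-1`. -/
def elev (δ : ℕ → ℤ) (w : List Bool) (a b : ℕ) : ℤ :=
  ∑ q ∈ Finset.Ico a b, stepVal δ w q

/-- `C` is the δ-excursion of the up step of `w` at position `p`:
the smallest (nonempty) factor of `w` starting at `p` whose δ-elevation is `0`. -/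
def IsDeltaExcAt (δ : ℕ → ℤ) (w : List Bool) (p : ℕ) (C : List Bool) : Prop :=
  w.getD p false = true ∧
  ∃ m, 0 < m ∧ p + m ≤ w.length ∧ C = (w.drop p).take m ∧
    elev δ w p (p + m) = 0 ∧ ∀ m', 0 < m' → m' < m → elev δ w p (p + m') ≠ 0

/-- `C` is the excursion of the up step of `w` at position `p`: the smallest factor
of `w` starting at `p` that is itself a Dyck word. -/
def IsExcursionAt (w : List Bool) (p : ℕ) (C : List Bool) : Prop :=
  w.getD p false = true ∧
  ∃ m, 0 < m ∧ p + m ≤ w.length ∧ C = (w.drop p).take m ∧ IsDyckPath C ∧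
    ∀ m', 0 < m' → m' < m → ¬ IsDyckPath ((w.drop p).take m')

/-- `ℓ_i(w; δ)`: the length of the δ-excursion of `u_i` in `w`. -/
noncomputable def excLen (δ : ℕ → ℤ) (w : List Bool) (i : ℕ) : ℕ :=
  sInf {m | 0 < m ∧ elev δ w (upPos w i) (upPos w i + m) = 0}

/-- `Q` is the δ-rotation of `P` at some up step: `P = A d C B` with `d u_i` a valley
and `C` the δ-excursion of `u_i`, and `Q = A C d B`. -/
def DeltaRot (δ : ℕ → ℤ) (P Q : List Bool) : Prop :=
  ∃ A C B, P = A ++ false :: (C ++ B) ∧ Q = A ++ (C ++ false :: B) ∧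
    IsDeltaExcAt δ P (A.length + 1) C

/-- The alt-Tamari order `Tam^δ`: reflexive transitive closure of δ-rotations. -/
def altLE (δ : ℕ → ℤ) : List Bool → List Bool → Prop :=
  Relation.ReflTransGen (DeltaRot δ)

/-- The Tamari order: the alt-Tamari order for `δ ≡ 1` (the δ-excursion of any up step
is then its excursion). -/
def tamLE : List Bool → List Bool → Prop := altLE fun _ => 1

/-- The height (number of `u`'s minus number of `d`'s) of the length-`j` prefix of `w`. -/
def prefHeight (w : List Bool) (j : ℕ) : ℤ :=
  ((w.take j).count true : ℤ) - ((w.take j).count false : ℤ)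

/-- The Dyck (inclusion) order: every prefix height of `P` is at most that of `Q`. -/
def dyckLE (P Q : List Bool) : Prop := ∀ j, prefHeight P j ≤ prefHeight Q j

/-- Strict version of a relation `le`. -/
def ltOf (le : List Bool → List Bool → Prop) (P Q : List Bool) : Prop :=
  le P Q ∧ ¬ le Q P

/-- There is a strict chain `P = c 0 < c 1 < ⋯ < c k = Q` inside `S`. -/
def HasChainIn (S : Set (List Bool)) (le : List Bool → List Bool → Prop)
    (P Q : List Bool) (k : ℕ) : Prop :=
  ∃ c : ℕ → List Bool, c 0 = P ∧ c k = Q ∧ (∀ i ≤ k, c i ∈ S) ∧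
    ∀ i < k, ltOf le (c i) (c (i + 1))

/-- The interval `[P,Q]` of the poset `(S, le)` has height `k`: `k` is the maximal
length of a chain from `P` to `Q`. -/
def IntervalHeight (S : Set (List Bool)) (le : List Bool → List Bool → Prop)
    (P Q : List Bool) (k : ℕ) : Prop :=
  HasChainIn S le P Q k ∧ ∀ m, HasChainIn S le P Q m → m ≤ k

/-- The interval `[P,Q]` of the poset `(S, le)` is linear: it is totally ordered. -/
def LinearInterval (S : Set (List Bool)) (le : List Bool → List Bool → Prop)
    (P Q : List Bool) : Prop :=
  P ∈ S ∧ Q ∈ S ∧ le P Q ∧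
  ∀ R R', R ∈ S → R' ∈ S → le P R → le R Q → le P R' → le R' Q → le R R' ∨ le R' R

/-- `Q` covers `P` in the poset `(S, le)`. -/
def CovIn (S : Set (List Bool)) (le : List Bool → List Bool → Prop)
    (P Q : List Bool) : Prop :=
  P ∈ S ∧ Q ∈ S ∧ ltOf le P Q ∧ ∀ R ∈ S, ¬ (ltOf le P R ∧ ltOf le R Q)

/-- The number of valleys (factors `du`) of `w`. -/
def valleys (w : List Bool) : ℕ :=
  ((List.range w.length).filter fun q => !w.getD q true && w.getD (q + 1) false).length

/-!
The δ-altitude of a word before position `k` depends only on `k` and on the number of up steps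
among its first `k` letters, and the δ-excursion of `u_j` ends where this altitude first returns to
its value before `u_j`. Moving the down step of the valley past the excursion `C_i` shifts the
altitude along `C_i` by one position to the left and by one unit up, and leaves it unchanged
elsewhere. Along `C_i` the altitude of `P` never goes below its value at the start of `C_i`, so a
first return inside `C_i` is translated, one passing over `C_i` starts strictly below it and is not
affected, and one ending at the start of `C_i` is postponed to the end of `C_i`.
-/

section FirstReturn

/-- The sequence `f` returns at time `b` to its value at time `a`, for the first time, and stays
strictly above that value in between. For the altitude of a word, `a` and `b` are the positions
where a δ-excursion starts and where it has just ended. -/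
structure IsFirstReturn (f : ℕ → ℤ) (a b : ℕ) : Prop where
  lt : a < b
  eq : f b = f a
  above : ∀ k, a < k → k < b → f a < f k

variable {f g : ℕ → ℤ} {a b : ℕ}

lemma IsFirstReturn.congr (h : IsFirstReturn f a b) (hfg : ∀ k, a ≤ k → k ≤ b → g k = f k) :
    IsFirstReturn g a b where
  lt := h.lt
  eq := by rw [hfg b h.lt.le le_rfl, hfg a le_rfl h.lt.le, h.eq]
  above k hak hkb := by
    rw [hfg a le_rfl h.lt.le, hfg k hak.le hkb.le]
    exact h.above k hak hkb

lemma IsFirstReturn.le_apply (h : IsFirstReturn f a b) {k : ℕ} (hak : a ≤ k) (hkb : k ≤ b) :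
    f a ≤ f k := by
  rcases hak.eq_or_lt with rfl | hak
  · exact le_rfl
  rcases hkb.eq_or_lt with rfl | hkb
  · exact h.eq.ge
  · exact (h.above k hak hkb).le

lemma exists_isFirstReturn (hstep : ∀ k, f k - 1 ≤ f (k + 1)) (ha : f a ≤ f (a + 1))
    (hex : ∃ b > a, f b ≤ f a) : ∃ b, IsFirstReturn f a b := by
  classical
  obtain ⟨hlt, hle⟩ := Nat.find_spec hex
  have habove : ∀ k, a < k → k < Nat.find hex → f a < f k := fun k hak hk =>
    not_le.mp fun hfk => Nat.find_min hex hk ⟨hak, hfk⟩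
  refine ⟨Nat.find hex, hlt, le_antisymm hle ?_, habove⟩
  obtain ⟨r, hr⟩ := Nat.exists_eq_add_one_of_ne_zero (Nat.ne_zero_of_lt hlt)
  rw [hr] at hlt habove ⊢
  rcases (Nat.lt_succ_iff.mp hlt).eq_or_lt with rfl | har
  · exact ha
  · have hfr := habove r har r.lt_succ_self
    have hdown := hstep r
    omega

end FirstReturn

section UpSteps

/-- The number of up steps among the first `k` letters of `w`. -/
def upCount (w : List Bool) (k : ℕ) : ℕ :=
  (w.take k).count true

variable {w : List Bool} {j q : ℕ}

lemma upCount_append_of_le_length {A : List Bool} {k : ℕ} (hk : k ≤ A.length) (B : List Bool) :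
    upCount (A ++ B) k = upCount A k := by
  rw [upCount, upCount, List.take_append_of_le_length hk]

lemma upCount_append_length_add (A B : List Bool) (k : ℕ) :
    upCount (A ++ B) (A.length + k) = A.count true + upCount B k := by
  rw [upCount, List.take_length_add_append, List.count_append, upCount]

lemma upCount_false_cons_succ (w : List Bool) (k : ℕ) :
    upCount (false :: w) (k + 1) = upCount w k :=
  List.count_cons_of_ne Bool.false_ne_true

lemma upCount_eq_count (w : List Bool) (k : ℕ) :
    upCount w k = Nat.count (fun q => w.getD q false = true) k := by
  induction k with
  | zero => rfl
  | succ k ih =>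
    rw [Nat.count_succ, ← ih, upCount, List.take_add_one, List.count_append, upCount,
      List.getD_eq_getElem?_getD]
    rcases w[k]? with _ | (_ | _) <;> rfl

lemma upCount_succ (w : List Bool) (q : ℕ) :
    upCount w (q + 1) = upCount w q + if w.getD q false = true then 1 else 0 := by
  rw [upCount_eq_count, upCount_eq_count, Nat.count_succ]

lemma upPos_eq_nth (w : List Bool) (j : ℕ) :
    upPos w j = Nat.nth (fun q => w.getD q false = true) (j - 1) := by
  have hlt : ∀ q, w.getD q false = true → q < w.length := fun q hq => by
    by_contra hlen
    rw [List.getD_eq_default _ _ (not_lt.mp hlen)] at hq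
    exact Bool.false_ne_true hq
  have hfin : {q | w.getD q false = true}.Finite := (Set.finite_lt_nat w.length).subset hlt
  have hset : hfin.toFinset =
      ((List.range w.length).filter fun q => w.getD q false = true).toFinset := by
    ext q
    simpa using hlt q
  rw [Nat.nth_eq_getD_sort hfin, hset, upPos, (List.toFinset_sort _ (List.nodup_range.filter _)).mpr
    (List.pairwise_le_range.filter _)]

lemma upPos_eq (hbefore : upCount w q + 1 = j) (hafter : upCount w (q + 1) = j) :
    upPos w j = q := by
  have hq : w.getD q false = true := by
    by_contra hdown
    rw [upCount_succ, if_neg hdown] at hafter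
    omega
  rw [upPos_eq_nth, ← hbefore, Nat.add_sub_cancel, upCount_eq_count]
  exact Nat.nth_count hq

lemma pred_lt_card_upSteps (hj1 : 1 ≤ j) (hj : j ≤ w.count true)
    (hfin : {q | w.getD q false = true}.Finite) : j - 1 < hfin.toFinset.card := by
  have hcard := Nat.count_le_card hfin w.length
  rw [← upCount_eq_count, upCount, List.take_length] at hcard
  omega

lemma getD_upPos (hj1 : 1 ≤ j) (hj : j ≤ w.count true) : w.getD (upPos w j) false = true := by
  rw [upPos_eq_nth]
  exact Nat.nth_mem _ (pred_lt_card_upSteps hj1 hj)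

lemma upCount_upPos (hj1 : 1 ≤ j) (hj : j ≤ w.count true) : upCount w (upPos w j) + 1 = j := by
  rw [upPos_eq_nth, upCount_eq_count, Nat.count_nth (pred_lt_card_upSteps hj1 hj)]
  exact Nat.sub_add_cancel hj1

lemma upCount_upPos_succ (hj1 : 1 ≤ j) (hj : j ≤ w.count true) :
    upCount w (upPos w j + 1) = j := by
  rw [upCount_succ, if_pos (getD_upPos hj1 hj), upCount_upPos hj1 hj]

end UpSteps

section Altitude

/-- The δ-altitude of `w` before position `k`, that is the δ-elevation of its prefix of length `k`.
It is written as the contribution of the up steps minus the number of down steps, so that it depends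
on `w` only through `upCount w k`. -/
def altitude (δ : ℕ → ℤ) (w : List Bool) (k : ℕ) : ℤ :=
  ∑ i ∈ Finset.range (upCount w k), δ (i + 1) - (k - upCount w k)

variable {δ : ℕ → ℤ} {w : List Bool}

lemma altitude_succ (δ : ℕ → ℤ) (w : List Bool) (k : ℕ) :
    altitude δ w (k + 1) = altitude δ w k + stepVal δ w k := by
  rw [stepVal, ← upCount, altitude, altitude, upCount_succ]
  split_ifs
  · rw [Finset.sum_range_succ]
    push_cast
    ring
  · rw [Nat.add_zero]
    push_cast
    ring

lemma elev_eq_altitude_sub (δ : ℕ → ℤ) (w : List Bool) {a b : ℕ} (hab : a ≤ b) :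
    elev δ w a b = altitude δ w b - altitude δ w a := by
  rw [elev, ← Finset.sum_Ico_sub _ hab]
  exact Finset.sum_congr rfl fun k _ => by rw [altitude_succ, add_sub_cancel_left]

lemma altitude_sub_one_le (hδ : ∀ i, 0 ≤ δ i) (w : List Bool) (k : ℕ) :
    altitude δ w k - 1 ≤ altitude δ w (k + 1) := by
  have hnonneg := hδ ((w.take (k + 1)).count true)
  rw [altitude_succ, stepVal]
  split_ifs <;> omega

lemma altitude_le_succ_of_up (hδ : ∀ i, 0 ≤ δ i) {k : ℕ} (hk : w.getD k false = true) :
    altitude δ w k ≤ altitude δ w (k + 1) := by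
  rw [altitude_succ, stepVal, if_pos hk]
  exact le_add_of_nonneg_right (hδ _)

-- Positions past the end of `w` count as down steps, so the altitude tends to `-∞`.
lemma exists_gt_altitude_le (δ : ℕ → ℤ) (w : List Bool) (a : ℕ) (c : ℤ) :
    ∃ b > a, altitude δ w b ≤ c := by
  have hend : ∀ k ≥ w.length, altitude δ w k = altitude δ w w.length + w.length - k :=
    fun k hk => by
      rw [altitude, altitude, upCount, upCount, List.take_of_length_le hk, List.take_length]
      ring
  refine ⟨w.length + a + 1 + (altitude δ w w.length - c).toNat, by omega, ?_⟩
  rw [hend _ (by omega)]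
  push_cast
  have := Int.self_le_toNat (altitude δ w w.length - c)
  omega

end Altitude

section Excursions

variable {δ : ℕ → ℤ} {w C : List Bool} {i p : ℕ}

lemma excLen_eq_of_elev_eq_zero {m : ℕ} (hm : 0 < m)
    (hzero : elev δ w (upPos w i) (upPos w i + m) = 0)
    (hmin : ∀ k, 0 < k → k < m → elev δ w (upPos w i) (upPos w i + k) ≠ 0) :
    excLen δ w i = m :=
  IsLeast.csInf_eq ⟨⟨hm, hzero⟩, fun k hk => not_lt.mp fun hlt => hmin k hk.1 hlt hk.2⟩

lemma IsFirstReturn.excLen_eq {b : ℕ} (h : IsFirstReturn (altitude δ w) (upPos w i) b) :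
    excLen δ w i = b - upPos w i := by
  have hlt := h.lt
  refine excLen_eq_of_elev_eq_zero (by omega) ?_ fun k hk hkb => ?_
  · rw [Nat.add_sub_cancel' hlt.le, elev_eq_altitude_sub δ w hlt.le, h.eq, sub_self]
  · rw [elev_eq_altitude_sub δ w (Nat.le_add_right _ _), sub_ne_zero]
    exact (h.above _ (by omega) (by omega)).ne'

lemma isFirstReturn_excLen (hδ : ∀ i, 0 ≤ δ i) (hi : w.getD (upPos w i) false = true) :
    IsFirstReturn (altitude δ w) (upPos w i) (upPos w i + excLen δ w i) := by
  obtain ⟨b, hb⟩ := exists_isFirstReturn (altitude_sub_one_le hδ w) (altitude_le_succ_of_up hδ hi)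
    (exists_gt_altitude_le δ w _ _)
  rwa [hb.excLen_eq, Nat.add_sub_cancel' hb.lt.le]

namespace IsDeltaExcAt

lemma eq_take_append (h : IsDeltaExcAt δ w p C) :
    w = w.take p ++ (C ++ w.drop (p + C.length)) := by
  obtain ⟨-, m, -, hlen, rfl, -⟩ := h
  rw [List.length_take, List.length_drop, min_eq_left (by omega), ← List.drop_drop,
    List.take_append_drop, List.take_append_drop]

lemma excLen_eq (h : IsDeltaExcAt δ w (upPos w i) C) : excLen δ w i = C.length := by
  obtain ⟨-, m, hm, hlen, rfl, hzero, hmin⟩ := h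
  rw [List.length_take, List.length_drop, min_eq_left (by omega)]
  exact excLen_eq_of_elev_eq_zero hm hzero hmin

end IsDeltaExcAt

end Excursions

section Rotation

/-- `Q` is obtained from `P` by moving the down step at position `t` to position `s`, past the
letters in between. The relation is recorded through the numbers of up steps in prefixes. -/
structure MovesDownStep (P Q : List Bool) (t s : ℕ) : Prop where
  le : t ≤ s
  upCount_before : ∀ k ≤ t, upCount Q k = upCount P k
  upCount_inside : ∀ k, t ≤ k → k ≤ s → upCount Q k = upCount P (k + 1)
  upCount_after : ∀ k > s, upCount Q k = upCount P k

lemma movesDownStep_append (A C B : List Bool) :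
    MovesDownStep (A ++ false :: (C ++ B)) (A ++ (C ++ false :: B)) A.length
      (A.length + C.length) where
  le := Nat.le_add_right _ _
  upCount_before k hk := by
    rw [upCount_append_of_le_length hk, upCount_append_of_le_length hk]
  upCount_inside k hk hk' := by
    obtain ⟨r, rfl⟩ := Nat.exists_eq_add_of_le hk
    have hr : r ≤ C.length := by omega
    rw [Nat.add_assoc, upCount_append_length_add, upCount_append_length_add,
      upCount_false_cons_succ, upCount_append_of_le_length hr, upCount_append_of_le_length hr]
  upCount_after k hk := by
    obtain ⟨r, rfl⟩ := Nat.exists_eq_add_of_lt hk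
    rw [Nat.add_assoc, Nat.add_assoc, upCount_append_length_add, upCount_append_length_add,
      upCount_append_length_add, upCount_false_cons_succ, ← Nat.add_assoc C.length,
      upCount_false_cons_succ, upCount_append_length_add]

lemma IsDeltaExcAt.movesDownStep {δ : ℕ → ℤ} {P C : List Bool} {t : ℕ}
    (h : IsDeltaExcAt δ P (t + 1) C) (hdown : P.getD t true = false) :
    MovesDownStep P (P.take t ++ (C ++ false :: P.drop (t + 1 + C.length))) t
      (t + C.length) := by
  have ht : t < P.length := by
    by_contra hlen
    rw [List.getD_eq_default _ _ (not_lt.mp hlen)] at hdown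
    exact Bool.false_ne_true hdown.symm
  have hP : P = P.take t ++ false :: (C ++ P.drop (t + 1 + C.length)) := by
    conv_lhs => rw [h.eq_take_append, List.take_succ_eq_append_getElem ht,
      ← List.getD_eq_getElem P true ht, hdown]
    simp
  have hmove := movesDownStep_append (P.take t) C (P.drop (t + 1 + C.length))
  rwa [← hP, List.length_take, min_eq_left ht.le] at hmove

namespace MovesDownStep

variable {δ : ℕ → ℤ} {P Q : List Bool} {t s j : ℕ}

lemma altitude_before (h : MovesDownStep P Q t s) {k : ℕ} (hk : k ≤ t) :
    altitude δ Q k = altitude δ P k := by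
  rw [altitude, altitude, h.upCount_before k hk]

lemma altitude_inside (h : MovesDownStep P Q t s) {k : ℕ} (hk : t ≤ k) (hk' : k ≤ s) :
    altitude δ Q k = altitude δ P (k + 1) + 1 := by
  rw [altitude, altitude, h.upCount_inside k hk hk']
  push_cast
  ring

lemma altitude_after (h : MovesDownStep P Q t s) {k : ℕ} (hk : s < k) :
    altitude δ Q k = altitude δ P k := by
  rw [altitude, altitude, h.upCount_after k hk]

lemma upPos_inside (h : MovesDownStep P Q t s) (hj1 : 1 ≤ j) (hj : j ≤ P.count true)
    (hlo : t < upPos P j) (hhi : upPos P j ≤ s) : upPos Q j = upPos P j - 1 := by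
  have hpred : upPos P j - 1 + 1 = upPos P j := by omega
  apply upPos_eq
  · rw [h.upCount_inside _ (by omega) (by omega), hpred, upCount_upPos hj1 hj]
  · rw [hpred, h.upCount_inside _ hlo.le hhi, upCount_upPos_succ hj1 hj]

lemma upPos_ne (h : MovesDownStep P Q t s) (hj1 : 1 ≤ j) (hj : j ≤ P.count true) :
    upPos P j ≠ t := by
  rintro rfl
  have hflat := (h.upCount_before _ le_rfl).symm.trans (h.upCount_inside _ le_rfl h.le)
  have hbefore := upCount_upPos hj1 hj
  have hafter := upCount_upPos_succ hj1 hj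
  omega

lemma upPos_outside (h : MovesDownStep P Q t s) (hj1 : 1 ≤ j) (hj : j ≤ P.count true)
    (hout : upPos P j ≤ t ∨ s < upPos P j) : upPos Q j = upPos P j := by
  have hne := h.upPos_ne hj1 hj
  rcases hout with hlt | hgt
  · exact upPos_eq (by rw [h.upCount_before _ hlt, upCount_upPos hj1 hj])
      (by rw [h.upCount_before _ (by omega), upCount_upPos_succ hj1 hj])
  · exact upPos_eq (by rw [h.upCount_after _ hgt, upCount_upPos hj1 hj])
      (by rw [h.upCount_after _ (by omega), upCount_upPos_succ hj1 hj])

variable {a b : ℕ}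

lemma isFirstReturn_before (h : MovesDownStep P Q t s) (hret : IsFirstReturn (altitude δ P) a b)
    (hb : b ≤ t) : IsFirstReturn (altitude δ Q) a b :=
  hret.congr fun _ _ hk => h.altitude_before (hk.trans hb)

lemma isFirstReturn_after (h : MovesDownStep P Q t s) (hret : IsFirstReturn (altitude δ P) a b)
    (ha : s < a) : IsFirstReturn (altitude δ Q) a b :=
  hret.congr fun _ hk _ => h.altitude_after (ha.trans_le hk)

lemma isFirstReturn_extended (h : MovesDownStep P Q t s)
    (hexc : IsFirstReturn (altitude δ P) (t + 1) (s + 1))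
    (hret : IsFirstReturn (altitude δ P) a (t + 1)) : IsFirstReturn (altitude δ Q) a (s + 1) := by
  have hat : a ≤ t := Nat.lt_succ_iff.mp hret.lt
  refine ⟨hat.trans_lt (Nat.lt_succ_of_le h.le), ?_, fun k hak hks => ?_⟩
  · rw [h.altitude_before hat, h.altitude_after s.lt_succ_self, hexc.eq, hret.eq]
  rw [h.altitude_before hat]
  rcases lt_or_ge k t with hkt | htk
  · rw [h.altitude_before hkt.le]
    exact hret.above k hak (by omega)
  · have hle := hexc.le_apply (k := k + 1) (by omega) (by omega)
    rw [h.altitude_inside htk (by omega), ← hret.eq]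
    omega

lemma isFirstReturn_across (h : MovesDownStep P Q t s)
    (hexc : IsFirstReturn (altitude δ P) (t + 1) (s + 1))
    (hret : IsFirstReturn (altitude δ P) a b) (ha : a ≤ t) (hb : t + 1 < b) :
    IsFirstReturn (altitude δ Q) a b := by
  have hlow : altitude δ P a < altitude δ P (t + 1) := hret.above _ (by omega) hb
  have hsb : s + 1 < b := by
    by_contra hbs
    have hle := hexc.le_apply hb.le (by omega)
    rw [hret.eq] at hle
    exact hle.not_gt hlow
  refine ⟨hret.lt, ?_, fun k hak hkb => ?_⟩
  · rw [h.altitude_before ha, h.altitude_after (by omega), hret.eq]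
  rw [h.altitude_before ha]
  rcases le_or_gt k t with hkt | htk
  · rw [h.altitude_before hkt]
    exact hret.above k hak hkb
  rcases le_or_gt k s with hks | hsk
  · have hle := hexc.le_apply (k := k + 1) (by omega) (by omega)
    rw [h.altitude_inside htk.le hks]
    omega
  · rw [h.altitude_after hsk]
    exact hret.above k hak hkb

lemma isFirstReturn_inside (h : MovesDownStep P Q t s)
    (hexc : IsFirstReturn (altitude δ P) (t + 1) (s + 1))
    (hret : IsFirstReturn (altitude δ P) a b) (hlo : t < a) (hhi : a ≤ s) :
    IsFirstReturn (altitude δ Q) (a - 1) (b - 1) := by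
  have hbs : b ≤ s + 1 := by
    by_contra hsb
    have habove := hret.above (s + 1) (by omega) (by omega)
    rw [hexc.eq] at habove
    exact (hexc.le_apply hlo (by omega)).not_gt habove
  have hab := hret.lt
  have hshift : ∀ k, a ≤ k + 1 → k + 1 ≤ b → altitude δ Q k = altitude δ P (k + 1) + 1 :=
    fun k hak hkb => h.altitude_inside (by omega) (by omega)
  refine ⟨by omega, ?_, fun k hak hkb => ?_⟩
  · rw [hshift _ (by omega) (by omega), hshift _ (by omega) (by omega),
      Nat.sub_add_cancel (by omega), Nat.sub_add_cancel (by omega), hret.eq]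
  · rw [hshift _ (by omega) (by omega), hshift _ (by omega) (by omega),
      Nat.sub_add_cancel (by omega)]
    exact add_lt_add_left (hret.above _ (by omega) (by omega)) 1

lemma excLen_extended (h : MovesDownStep P Q t s) (hδ : ∀ i, 0 ≤ δ i)
    (hexc : IsFirstReturn (altitude δ P) (t + 1) (s + 1)) (hj1 : 1 ≤ j) (hj : j ≤ P.count true)
    (hend : upPos P j + excLen δ P j = t + 1) : excLen δ Q j = excLen δ P j + (s - t) := by
  have hret := isFirstReturn_excLen hδ (getD_upPos hj1 hj)
  rw [hend] at hret
  have hlt := hret.lt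
  have hpos := h.upPos_outside hj1 hj (.inl (by omega))
  have hretQ := h.isFirstReturn_extended hexc hret
  rw [← hpos] at hretQ
  rw [hretQ.excLen_eq]
  have hle := h.le
  omega

lemma excLen_unchanged (h : MovesDownStep P Q t s) (hδ : ∀ i, 0 ≤ δ i)
    (hexc : IsFirstReturn (altitude δ P) (t + 1) (s + 1)) (hj1 : 1 ≤ j) (hj : j ≤ P.count true)
    (hend : upPos P j + excLen δ P j ≠ t + 1) : excLen δ Q j = excLen δ P j := by
  have hret := isFirstReturn_excLen hδ (getD_upPos hj1 hj)
  by_cases hin : t < upPos P j ∧ upPos P j ≤ s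
  · have hretQ := h.isFirstReturn_inside hexc hret hin.1 hin.2
    rw [← h.upPos_inside hj1 hj hin.1 hin.2] at hretQ
    rw [hretQ.excLen_eq, h.upPos_inside hj1 hj hin.1 hin.2]
    omega
  have hout : upPos P j ≤ t ∨ s < upPos P j := by omega
  have hretQ : IsFirstReturn (altitude δ Q) (upPos P j) (upPos P j + excLen δ P j) := by
    rcases hout with hbefore | hafter
    · rcases lt_or_gt_of_ne hend with hshort | hlong
      · exact h.isFirstReturn_before hret (by omega)
      · exact h.isFirstReturn_across hexc hret hbefore hlong
    · exact h.isFirstReturn_after hret hafter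
  rw [← h.upPos_outside hj1 hj hout] at hretQ
  rw [hretQ.excLen_eq, h.upPos_outside hj1 hj hout, Nat.add_sub_cancel_left]

end MovesDownStep

end Rotation

lemma IsIncFun.nonneg {δ : ℕ → ℤ} (hδ : IsIncFun δ) (i : ℕ) : 0 ≤ δ i := by
  rcases hδ i with h | h <;> simp [h]

theorem stmt8_general {δ : ℕ → ℤ} (hδ : ∀ i, 0 ≤ δ i) {P Q C : List Bool} {i : ℕ}
    (hvalley : 1 ≤ upPos P i ∧ P.getD (upPos P i - 1) true = false)
    (hC : IsDeltaExcAt δ P (upPos P i) C)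
    (hQdef : Q = P.take (upPos P i - 1) ++ (C ++ false :: P.drop (upPos P i + C.length))) :
    (∀ j, 1 ≤ j → j ≤ P.count true →
      ((upPos P i ≤ upPos P j ∧ upPos P j < upPos P i + C.length →
          hpos Q j = hpos P j - 1) ∧
        (¬ (upPos P i ≤ upPos P j ∧ upPos P j < upPos P i + C.length) →
          hpos Q j = hpos P j))) ∧
    (∀ j, 1 ≤ j → j ≤ P.count true →
      ((upPos P j + excLen δ P j = upPos P i →
          excLen δ Q j = excLen δ P j + excLen δ P i) ∧
        (upPos P j + excLen δ P j ≠ upPos P i →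
          excLen δ Q j = excLen δ P j))) := by
  have hexc := isFirstReturn_excLen hδ hC.1
  rw [hC.excLen_eq] at hexc ⊢
  obtain ⟨t, ht⟩ := Nat.exists_eq_add_of_le' hvalley.1
  rw [ht] at hvalley hC hQdef hexc ⊢
  have hmove : MovesDownStep P Q t (t + C.length) := hQdef ▸ hC.movesDownStep hvalley.2
  rw [Nat.add_right_comm] at hexc
  refine ⟨fun j hj1 hj => ⟨fun hin => ?_, fun hout => ?_⟩,
    fun j hj1 hj => ⟨fun hend => ?_, fun hend => ?_⟩⟩
  · have := hmove.upPos_inside hj1 hj (by omega) (by omega)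
    unfold hpos
    omega
  · rw [hpos, hpos, hmove.upPos_outside hj1 hj (by omega)]
  · rw [hmove.excLen_extended hδ hexc hj1 hj hend, Nat.add_sub_cancel_left]
  · exact hmove.excLen_unchanged hδ hexc hj1 hj hend

/-- effect of the δ-rotation at a valley `d u_i` on the positions `h_j`
and the δ-excursion lengths `ℓ_j`. -/
theorem stmt8 (n : ℕ) (δ : ℕ → ℤ) (hδ : IsIncFun δ) (P Q C : List Bool)
    (hP : IsDyckWord n P) (hQ : IsDyckWord n Q) (i : ℕ) (hi1 : 1 ≤ i) (hin : i ≤ n)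
    (hvalley : 1 ≤ upPos P i ∧ P.getD (upPos P i - 1) true = false)
    (hC : IsDeltaExcAt δ P (upPos P i) C)
    (hQdef : Q = P.take (upPos P i - 1) ++ (C ++ false :: P.drop (upPos P i + C.length))) :
    (∀ j, 1 ≤ j → j ≤ n →
      ((upPos P i ≤ upPos P j ∧ upPos P j < upPos P i + C.length →
          hpos Q j = hpos P j - 1) ∧
        (¬ (upPos P i ≤ upPos P j ∧ upPos P j < upPos P i + C.length) →
          hpos Q j = hpos P j))) ∧
    (∀ j, 1 ≤ j → j ≤ n →
      ((upPos P j + excLen δ P j = upPos P i →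
          excLen δ Q j = excLen δ P j + excLen δ P i) ∧
        (upPos P j + excLen δ P j ≠ upPos P i →
          excLen δ Q j = excLen δ P j))) := by
  obtain ⟨rfl, -⟩ := hP
  exact stmt8_general hδ.nonneg hvalley hC hQdef
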